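/- The K-vector space with basis {w_n : n ≥ 1}, equipped with the multilinear operations {w_n; w_{m_1},…,w_{m_q}} = C(n+1, q) · w_{n+m_1+⋯+m_q} for q ≥ 1 (and {w_n;} = w_n for q = 0), where C(n+1,q) is the binomial coefficient, is a brace algebra: these operations satisfy the brace relation. -/

import Mathlib

/-! The Faà di Bruno brace algebra: the vector space with basis `{wₙ : n ≥ 1}`
and operations `{wₙ; w_{m₁},…,w_{m_q}} = C(n+1, q) · w_{n+m₁+⋯+m_q}`. -/

section

variable (K : Type*) [Field K]

/-- All splittings of a list into a prefix and a suffix. -/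
def splits {α : Type*} (l : List α) : List (List α × List α) :=
  (List.range (l.length + 1)).map fun i => (l.take i, l.drop i)

/-- All factorizations of a list into `k` (possibly empty) consecutive factors. -/
def splitsN {α : Type*} : ℕ → List α → List (List (List α))
  | 0, l => if l.isEmpty then [[]] else []
  | k + 1, l => (splits l).flatMap fun p => (splitsN k p.2).map fun r => p.1 :: r

/-- The vector space with basis `{wₙ : n ≥ 1}`. -/
abbrev FdB := ℕ+ →₀ K

/-- Multilinear expansion of a word of vectors into a formal combination of
words of basis indices. -/
noncomputable def wordExpand : List (FdB K) → (List ℕ+ →₀ K)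
  | [] => Finsupp.single [] 1
  | b :: rest => b.sum fun m c => c • Finsupp.mapDomain (List.cons m) (wordExpand rest)

/-- The brace operations `{wₙ; w_{m₁},…,w_{m_q}} = C(n+1, q)·w_{n+m₁+⋯+m_q}`
(`{wₙ;} = wₙ` for `q = 0`), extended multilinearly. -/
noncomputable def Mfdb (a : FdB K) (l : List (FdB K)) : FdB K :=
  a.sum fun n c => c •
    (wordExpand K l).sum fun ms d => d •
      Finsupp.single (ms.foldl (· + ·) n) ((((n : ℕ) + 1).choose ms.length : K))

variable {K}

/-- The word on the right-hand side of the brace relation, for a factorization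
of `zs` into `2n+1` consecutive (possibly empty) blocks braced into `ys`. -/
noncomputable def braceRHSword (M : FdB K → List (FdB K) → FdB K) :
    List (List (FdB K)) → List (FdB K) → List (FdB K)
  | [P], [] => P
  | P :: B :: rest, y :: ys => P ++ M y B :: braceRHSword M rest ys
  | _, _ => []

/-- The brace relation
`{{x; y₁,…,yₙ}; z₁,…,z_m} = Σ {x; z₁,…,{y₁; z_{k₁},…},…,{yₙ; z_{kₙ},…},…,z_m}`,
the sum over all ways to choose `n` disjoint consecutive (possibly empty) blocks
of `z₁⋯z_m`, in order, braced into `y₁,…,yₙ`. -/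
def BraceRel (M : FdB K → List (FdB K) → FdB K) : Prop :=
  ∀ (x : FdB K) (ys zs : List (FdB K)),
    M (M x ys) zs =
      ((splitsN (2 * ys.length + 1) zs).map fun Zs => M x (braceRHSword M Zs ys)).sum

/-!
Send `wₙ` to the polynomial `X^(n+1)`. As `∂_q X^(n+1) = C(n+1, q) X^(n+1-q)` for the `q`-th Hasse
derivative `∂_q`, the operations become `{f; g₁,…,g_q} = ∂_q f · g₁⋯g_q`, and it remains to check
the brace relation for these. Its left-hand side is `∂_m(∂_n f · y₁⋯yₙ) · z₁⋯z_m`. On the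
right-hand side, every term is a product of `z₁⋯z_m`, a Hasse derivative of `f` and a Hasse
derivative of each `yᵢ`. A derivative `∂_{n+s} f` occurs when `s` of the `zⱼ` remain outside the
braces; these can be distributed over the `n + 1` gaps in `C(n+s, n)` ways. The two sides thus agree
by the Leibniz rule `∂_m(fg) = Σ ∂_s f · ∂_b g` and by `∂_s ∂_n = C(n+s, n) ∂_{n+s}`.
-/

section Splittings

open Finset

variable {α β M : Type*} [AddCommMonoid M]

theorem sum_antidiagonal_antidiagonal_assoc {A : Type*} [AddCommMonoid A] [HasAntidiagonal A]
    (n : A) (F : A → A → A → M) :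
    ∑ u ∈ antidiagonal n, ∑ v ∈ antidiagonal u.2, F u.1 v.1 v.2 =
      ∑ u ∈ antidiagonal n, ∑ v ∈ antidiagonal u.1, F v.1 v.2 u.2 := by
  rw [sum_sigma', sum_sigma']
  refine sum_nbij' (fun x ↦ ⟨(x.1.1 + x.2.1, x.2.2), (x.1.1, x.2.1)⟩)
    (fun x ↦ ⟨(x.2.1, x.2.2 + x.1.2), (x.2.2, x.1.2)⟩) ?_ ?_ ?_ ?_ ?_ <;>
  · rintro ⟨⟨a, b⟩, ⟨c, d⟩⟩ h
    simp only [mem_sigma, HasAntidiagonal.mem_antidiagonal] at h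
    obtain ⟨rfl, rfl⟩ := h
    simp [add_assoc]

theorem sum_antidiagonal_antidiagonal_left_comm {A : Type*} [AddCommMonoid A] [HasAntidiagonal A]
    (n : A) (F : A → A → A → M) :
    ∑ u ∈ antidiagonal n, ∑ v ∈ antidiagonal u.2, F u.1 v.1 v.2 =
      ∑ u ∈ antidiagonal n, ∑ v ∈ antidiagonal u.2, F v.1 u.1 v.2 := by
  rw [sum_antidiagonal_antidiagonal_assoc,
    sum_antidiagonal_antidiagonal_assoc n fun a b c ↦ F b a c]
  exact sum_congr rfl fun u _ ↦ sum_equiv (Equiv.prodComm A A) (by simp [add_comm]) (by simp)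

theorem sum_map_splits (l : List α) (F : List α × List α → M) (f : ℕ → ℕ → M)
    (h : ∀ P Q, P ++ Q = l → F (P, Q) = f P.length Q.length) :
    ((splits l).map F).sum = ∑ p ∈ antidiagonal l.length, f p.1 p.2 := by
  rw [Nat.sum_antidiagonal_eq_sum_range_succ f, splits, List.map_map]
  refine congrArg List.sum (List.map_congr_left fun i hi ↦ ?_)
  have hi : i ≤ l.length := Nat.lt_succ_iff.mp (List.mem_range.mp hi)
  simp [h _ _ (List.take_append_drop i l), hi]

theorem sum_map_splitsN_succ (k : ℕ) (l : List α) (F : List (List α) → M) :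
    ((splitsN (k + 1) l).map F).sum =
      ((splits l).map fun p ↦ ((splitsN k p.2).map fun r ↦ F (p.1 :: r)).sum).sum := by
  rw [splitsN]
  induction splits l with
  | nil => simp
  | cons p ps ih => simp [ih, Function.comp_def]

theorem splitsN_one (l : List α) : splitsN 1 l = [[l]] := by
  have h_proper_prefix : ((List.range l.length).map fun i ↦ (l.take i, l.drop i)).flatMap
      (fun p ↦ (splitsN 0 p.2).map fun r ↦ p.1 :: r) = [] := by
    simp +contextual [splitsN, List.flatMap_eq_nil_iff, Nat.not_le_of_lt]
  rw [splitsN, splits, List.range_succ, List.map_append, List.flatMap_append, h_proper_prefix]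
  simp [splitsN]

theorem splits_map (f : α → β) (l : List α) :
    splits (l.map f) = (splits l).map (Prod.map (List.map f) (List.map f)) := by
  simp [splits, List.map_take, List.map_drop]

theorem splitsN_map (f : α → β) (k : ℕ) (l : List α) :
    splitsN k (l.map f) = (splitsN k l).map (List.map (List.map f)) := by
  induction k generalizing l with
  | zero => cases l <;> simp [splitsN]
  | succ k ih =>
    simp [splitsN, splits_map, ih, List.map_flatMap, List.flatMap_map, Function.comp_def]

end Splittings

section BraceWord

/-- The words `P₀ · M(y₁; B₁) · P₁ ⋯ M(yₙ; Bₙ) · Pₙ` of `braceRHSword`, for an operation `M` on an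
arbitrary type, so that they can be transported along maps. -/
def braceWord {A : Type*} (M : A → List A → A) : List (List A) → List A → List A
  | [P], [] => P
  | P :: B :: rest, y :: ys => P ++ M y B :: braceWord M rest ys
  | _, _ => []

theorem map_braceRHSword {A : Type*} {φ : FdB K → A} {M : FdB K → List (FdB K) → FdB K}
    {N : A → List A → A} (hφ : ∀ a l, φ (M a l) = N (φ a) (l.map φ)) (Zs : List (List (FdB K)))
    (ys : List (FdB K)) :
    (braceRHSword M Zs ys).map φ = braceWord N (Zs.map (List.map φ)) (ys.map φ) := by
  induction ys generalizing Zs <;> rcases Zs with _ | ⟨P, _ | ⟨B, Zs⟩⟩ <;>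
    simp_all [braceRHSword, braceWord]

end BraceWord

section HasseBrace

open Finset Polynomial

variable {R : Type*} [CommSemiring R]

/-- The brace operation `{f; g₁,…,g_q} = ∂_q f · g₁⋯g_q` on polynomials, where `∂_q` is the `q`-th
Hasse derivative. -/
noncomputable def hasseBrace (f : R[X]) (gs : List R[X]) : R[X] :=
  hasseDeriv gs.length f * gs.prod

/-- The sum `Σ c_{|W|} · ∏ W` over the words `W` on the right-hand side of the brace relation. The
relation itself is the case `c_j = ∂_j f`; arbitrary weights make the sum amenable to induction on
`ys`, where `c` gets shifted. -/
noncomputable def braceSum (c : ℕ → R[X]) (ys zs : List R[X]) : R[X] :=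
  ((splitsN (2 * ys.length + 1) zs).map fun Zs ↦
    c (braceWord hasseBrace Zs ys).length * (braceWord hasseBrace Zs ys).prod).sum

theorem braceSum_nil (c : ℕ → R[X]) (zs : List R[X]) :
    braceSum c [] zs = c zs.length * zs.prod := by
  simp [braceSum, splitsN_one, braceWord]

theorem braceSum_cons (c : ℕ → R[X]) (y : R[X]) (ys zs : List R[X]) :
    braceSum c (y :: ys) zs =
      ((splits zs).map fun p ↦ ((splits p.2).map fun q ↦ p.1.prod * hasseBrace y q.1 *
        braceSum (fun j ↦ c (p.1.length + 1 + j)) ys q.2).sum).sum := by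
  simp only [braceSum, List.length_cons, Nat.mul_succ, sum_map_splitsN_succ,
    ← List.sum_map_mul_left]
  simp [braceWord, add_assoc, add_comm 1, mul_assoc, mul_left_comm]

theorem sum_antidiagonal_choose_smul_mul_hasseDeriv_mul (c : ℕ → R[X]) (m n : ℕ) (f g : R[X]) :
    ∑ u ∈ antidiagonal m, ∑ v ∈ antidiagonal u.2, hasseDeriv v.1 f *
        ∑ p ∈ antidiagonal v.2,
          (n + p.1).choose n • c (u.1 + 1 + (n + p.1)) * hasseDeriv p.2 g =
      ∑ p ∈ antidiagonal m,
        (n + 1 + p.1).choose (n + 1) • c (n + 1 + p.1) * hasseDeriv p.2 (f * g) := by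
  let a (i j : ℕ) : R[X] := (n + j).choose n • c (i + 1 + (n + j))
  have h_leibniz (i k : ℕ) :
      ∑ v ∈ antidiagonal k, hasseDeriv v.1 f *
        ∑ p ∈ antidiagonal v.2, a i p.1 * hasseDeriv p.2 g =
      ∑ p ∈ antidiagonal k, a i p.1 * hasseDeriv p.2 (f * g) := by
    simp only [hasseDeriv_mul, mul_sum, mul_left_comm (hasseDeriv _ f)]
    exact sum_antidiagonal_antidiagonal_left_comm k fun i' j l ↦
      a i j * (hasseDeriv i' f * hasseDeriv l g)
  have h_choose (e : ℕ) :
      ∑ v ∈ antidiagonal e, a v.1 v.2 = (n + 1 + e).choose (n + 1) • c (n + 1 + e) := by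
    rw [add_right_comm, ← sum_antidiagonal_choose_add, sum_smul]
    refine sum_congr rfl fun v hv ↦ ?_
    rw [← HasAntidiagonal.mem_antidiagonal.mp hv,
      show n + (v.1 + v.2) + 1 = v.1 + 1 + (n + v.2) by ring]
  calc
    _ = ∑ u ∈ antidiagonal m, ∑ v ∈ antidiagonal u.2, a u.1 v.1 * hasseDeriv v.2 (f * g) :=
      sum_congr rfl fun u _ ↦ h_leibniz u.1 u.2
    _ = ∑ u ∈ antidiagonal m, ∑ v ∈ antidiagonal u.1, a v.1 v.2 * hasseDeriv u.2 (f * g) :=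
      sum_antidiagonal_antidiagonal_assoc m fun i j l ↦ a i j * hasseDeriv l (f * g)
    _ = _ := by simp only [← sum_mul, h_choose]

theorem braceSum_eq_prod_mul_sum (c : ℕ → R[X]) (ys zs : List R[X]) :
    braceSum c ys zs = zs.prod * ∑ p ∈ antidiagonal zs.length,
      (ys.length + p.1).choose ys.length • c (ys.length + p.1) * hasseDeriv p.2 ys.prod := by
  induction ys generalizing c zs with
  | nil =>
    rw [braceSum_nil, sum_eq_single (zs.length, 0)]
    · simp [mul_comm]
    · rintro ⟨a, b⟩ hab hne
      have hb : 0 < b := by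
        rw [HasAntidiagonal.mem_antidiagonal] at hab
        grind
      simp [hasseDeriv_apply_one b hb]
    · simp
  | cons y ys ih =>
    let S (a k : ℕ) : R[X] := ∑ p ∈ antidiagonal k,
      (ys.length + p.1).choose ys.length • c (a + 1 + (ys.length + p.1)) * hasseDeriv p.2 ys.prod
    calc
      braceSum c (y :: ys) zs
        = ∑ u ∈ antidiagonal zs.length, ∑ v ∈ antidiagonal u.2,
            zs.prod * (hasseDeriv v.1 y * S u.1 v.2) := by
        rw [braceSum_cons]
        refine sum_map_splits zs _
          (fun a k ↦ ∑ v ∈ antidiagonal k, zs.prod * (hasseDeriv v.1 y * S a v.2))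
          fun P Q hPQ ↦ sum_map_splits Q _
            (fun b k ↦ zs.prod * (hasseDeriv b y * S P.length k)) fun B T hBT ↦ ?_
        rw [ih, ← hPQ, ← hBT, List.prod_append, List.prod_append, hasseBrace]
        ring
      _ = _ := by
        simp only [← mul_sum]
        rw [sum_antidiagonal_choose_smul_mul_hasseDeriv_mul, List.length_cons, List.prod_cons]

theorem hasseDeriv_hasseDeriv_mul (m n : ℕ) (f g : R[X]) :
    hasseDeriv m (hasseDeriv n f * g) = ∑ p ∈ antidiagonal m,
      (n + p.1).choose n • hasseDeriv (n + p.1) f * hasseDeriv p.2 g := by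
  rw [hasseDeriv_mul]
  refine sum_congr rfl fun p _ ↦ ?_
  rw [← LinearMap.comp_apply, hasseDeriv_comp, LinearMap.smul_apply, Nat.choose_symm_add,
    add_comm p.1]

theorem hasseBrace_hasseBrace (f : R[X]) (ys zs : List R[X]) :
    hasseBrace (hasseBrace f ys) zs =
      ((splitsN (2 * ys.length + 1) zs).map fun Zs ↦
        hasseBrace f (braceWord hasseBrace Zs ys)).sum := by
  calc
    _ = braceSum (fun j ↦ hasseDeriv j f) ys zs := by
      rw [braceSum_eq_prod_mul_sum, hasseBrace, hasseBrace, hasseDeriv_hasseDeriv_mul, mul_comm]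
    _ = _ := rfl

theorem hasseBrace_X_pow_succ (n : ℕ) (ms : List ℕ) :
    hasseBrace ((X : R[X]) ^ (n + 1)) (ms.map fun m ↦ X ^ (m + 1)) =
      ((n + 1).choose ms.length : R) • X ^ (n + ms.sum + 1) := by
  have h_prod : (ms.map fun m ↦ (X : R[X]) ^ (m + 1)).prod = X ^ (ms.sum + ms.length) := by
    induction ms with
    | nil => simp
    | cons m ms ih =>
      rw [List.map_cons, List.prod_cons, ih, ← pow_add, List.sum_cons, List.length_cons]
      ring
  rw [hasseBrace, List.length_map, h_prod, ← monomial_one_right_eq_X_pow, hasseDeriv_monomial,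
    mul_one, ← smul_X_eq_monomial, smul_mul_assoc, ← pow_add]
  obtain h | h := lt_or_ge (n + 1) ms.length
  · simp [Nat.choose_eq_zero_of_lt h]
  · congr 2
    omega

end HasseBrace

namespace FdB

open Polynomial

theorem coe_foldl_add (n : ℕ+) (ms : List ℕ+) :
    ((ms.foldl (· + ·) n : ℕ+) : ℕ) = n + (ms.map PNat.val).sum := by
  induction ms generalizing n with
  | nil => simp
  | cons m ms ih => simp [ih, add_assoc]

theorem length_of_mem_support_wordExpand {l : List (FdB K)} {ms : List ℕ+}
    (h : ms ∈ (wordExpand K l).support) : ms.length = l.length := by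
  induction l generalizing ms with
  | nil => simp_all [wordExpand]
  | cons b l ih =>
    rw [wordExpand] at h
    obtain ⟨m, -, hm⟩ := Finsupp.mem_support_finsetSum _ h
    obtain ⟨ms', hms', rfl⟩ :=
      Finset.mem_image.mp (Finsupp.mapDomain_support (Finsupp.support_smul hm))
    rw [List.length_cons, List.length_cons, ih hms']

theorem linearCombination_wordExpand {A : Type*} [Semiring A] [Algebra K A] (v : ℕ+ → A)
    (l : List (FdB K)) :
    Finsupp.linearCombination K (fun ms : List ℕ+ ↦ (ms.map v).prod) (wordExpand K l) =
      (l.map (Finsupp.linearCombination K v)).prod := by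
  induction l with
  | nil => simp [wordExpand]
  | cons b l ih =>
    have h_cons (m : ℕ+) : Finsupp.linearCombination K (fun ms : List ℕ+ ↦ (ms.map v).prod)
        (Finsupp.mapDomain (List.cons m) (wordExpand K l)) =
          v m * (l.map (Finsupp.linearCombination K v)).prod := by
      rw [Finsupp.linearCombination_mapDomain, ← ih, Finsupp.linearCombination_apply,
        Finsupp.linearCombination_apply, Finsupp.mul_sum]
      simp
    simp [wordExpand, map_finsuppSum, h_cons, Finsupp.linearCombination_apply, Finsupp.sum_mul]

variable (K) in
/-- The embedding `wₙ ↦ X^(n+1)` of the Faà di Bruno brace algebra into the polynomials. -/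
noncomputable def toPolynomial : FdB K →ₗ[K] K[X] :=
  Finsupp.linearCombination K fun n : ℕ+ ↦ X ^ (n + 1 : ℕ)

theorem toPolynomial_injective : Function.Injective (toPolynomial K) := by
  have h : Function.Injective fun n : ℕ+ ↦ (n + 1 : ℕ) :=
    (add_left_injective 1).comp PNat.coe_injective
  have := (basisMonomials K).linearIndependent.comp _ h
  simp only [coe_basisMonomials, Function.comp_def, monomial_one_right_eq_X_pow] at this
  exact this

theorem toPolynomial_Mfdb (a : FdB K) (l : List (FdB K)) :
    toPolynomial K (Mfdb K a l) = hasseBrace (toPolynomial K a) (l.map (toPolynomial K)) := by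
  have h_basis (n : ℕ+) : toPolynomial K ((wordExpand K l).sum fun ms d ↦
      d • Finsupp.single (ms.foldl (· + ·) n) (((n : ℕ) + 1).choose ms.length : K)) =
        hasseBrace (X ^ (n + 1 : ℕ)) (l.map (toPolynomial K)) := by
    rw [hasseBrace, List.length_map, toPolynomial, ← linearCombination_wordExpand, map_finsuppSum,
      Finsupp.linearCombination_apply K (wordExpand K l), Finsupp.mul_sum]
    refine Finsupp.sum_congr fun ms hms ↦ ?_
    have h_word := hasseBrace_X_pow_succ (R := K) n (ms.map PNat.val)
    rw [hasseBrace, List.map_map, List.length_map, List.length_map, ← coe_foldl_add] at h_word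
    rw [map_smul, Finsupp.linearCombination_single, ← h_word,
      length_of_mem_support_wordExpand hms, mul_smul_comm]
    rfl
  simp only [Mfdb, map_finsuppSum, map_smul, h_basis]
  simp only [hasseBrace, toPolynomial, Finsupp.linearCombination_apply, map_finsuppSum, map_smul,
    Finsupp.sum_mul, smul_mul_assoc]

end FdB

/-- The `K`-vector space with basis `{wₙ : n ≥ 1}`, equipped
with the multilinear operations
`{wₙ; w_{m₁},…,w_{m_q}} = C(n+1, q) · w_{n+m₁+⋯+m_q}` for `q ≥ 1`
(and `{wₙ;} = wₙ` for `q = 0`), where `C(n+1,q)` is the binomial coefficient, is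
a brace algebra: these operations satisfy the brace relation. -/
theorem fdb_is_brace_algebra (K : Type*) [Field K] : BraceRel (Mfdb K) := by
  intro x ys zs
  apply FdB.toPolynomial_injective
  rw [map_list_sum, List.map_map]
  simp only [FdB.toPolynomial_Mfdb, Function.comp_def]
  rw [hasseBrace_hasseBrace, splitsN_map, List.map_map, List.length_map]
  simp only [Function.comp_def, map_braceRHSword FdB.toPolynomial_Mfdb]

end
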